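/- Let d ≥ 1 and let M = I − E be a real d×d matrix such that |e_{ij}| ≤ ε for all 1 ≤ i, j ≤ d, where d·ε ≤ 1. Then det(M) ≥ 1 − d·ε. -/

import Mathlib

open Matrix

/-!
If `|E i j| ≤ u i * v j` and `u ⬝ᵥ v ≤ 1`, then `det (1 - E)` is at least `1 - u ⬝ᵥ v`, the value
attained at the rank one matrix `E = vecMulVec u v`. The point is that this kind of bound survives
Gaussian elimination: the pivot `1 - E₀₀` is at least `p = 1 - u₀ * v₀`, the Schur complement is
`1 - F` with `|F i j| ≤ (u i / p) * v j`, and `p * (1 - ∑ i ≠ 0, (u i / p) * v i) = 1 - u ⬝ᵥ v`.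
If `u ⬝ᵥ v = 1` the pivot may vanish, so that case is reached as a limit of `t • E` with `t < 1`.
-/

section Elimination

variable {ι K : Type*} [Field K]

/-- The Schur complement of the `(none, none)` entry of `M`, that is, what one step of Gaussian
elimination with pivot `M none none ≠ 0` leaves of `M`; `Option` singles out the row and column that
are eliminated. -/
def schurComplementNone (M : Matrix (Option ι) (Option ι) K) : Matrix ι ι K :=
  of fun i j => M (some i) (some j) - M (some i) none * M none (some j) / M none none

theorem det_eq_mul_det_schurComplementNone [Fintype ι] [DecidableEq ι]
    {M : Matrix (Option ι) (Option ι) K} (hpivot : M none none ≠ 0) :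
    M.det = M none none * (schurComplementNone M).det := by
  let e : ι ⊕ Unit ≃ Option ι := (Equiv.optionEquivSumPUnit ι).symm
  let A := M.submatrix some some
  let B := replicateCol Unit fun i => M (some i) none
  let C := replicateRow Unit fun j => M none (some j)
  let D : Matrix Unit Unit K := diagonal fun _ => M none none
  have hblocks : M.submatrix e e = fromBlocks A B C D := by
    ext (i | _) (j | _) <;> simp [e, A, B, C, D]
  let : Invertible D :=
    ⟨diagonal fun _ => (M none none)⁻¹, by simp [D, hpivot], by simp [D, hpivot]⟩
  have hschur : A - B * ⅟D * C = schurComplementNone M := by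
    have hinv : ⅟D = diagonal fun _ => (M none none)⁻¹ := rfl
    ext i j
    simp [hinv, A, B, C, mul_apply, schurComplementNone, div_eq_mul_inv, mul_right_comm]
  rw [← det_submatrix_equiv_self e, hblocks, det_fromBlocks₂₂, hschur, det_diagonal,
    Fintype.prod_unique]

theorem mul_one_sub_dotProduct_div_some [Fintype ι] {u v : Option ι → K}
    (h : 1 - u none * v none ≠ 0) :
    (1 - u none * v none) *
        (1 - (fun i => u (some i) / (1 - u none * v none)) ⬝ᵥ (fun i => v (some i))) =
      1 - u ⬝ᵥ v := by
  simp only [dotProduct, Fintype.sum_option, div_mul_eq_mul_div, ← Finset.sum_div]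
  rw [mul_sub, mul_div_cancel₀ _ h]
  ring

end Elimination

section Domination

variable {ι K : Type*} [Field K] [LinearOrder K] [IsStrictOrderedRing K]

theorem abs_one_sub_schurComplementNone_le [DecidableEq ι] {E : Matrix (Option ι) (Option ι) K}
    {u v : Option ι → K} (hE : ∀ i j, |E i j| ≤ u i * v j) (hlt : u none * v none < 1) (i j : ι) :
    |(1 - schurComplementNone (1 - E) : Matrix ι ι K) i j| ≤
      u (some i) / (1 - u none * v none) * v (some j) := by
  have hp : 0 < 1 - u none * v none := sub_pos.2 hlt
  have hpivot : 1 - u none * v none ≤ |1 - E none none| :=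
    (sub_le_sub_left ((le_abs_self _).trans (hE none none)) 1).trans (le_abs_self _)
  have happly : (1 - schurComplementNone (1 - E) : Matrix ι ι K) i j =
      E (some i) (some j) + E (some i) none * E none (some j) / (1 - E none none) := by
    simp only [schurComplementNone, Matrix.sub_apply, of_apply, one_apply, Option.some.injEq,
      reduceCtorEq, ↓reduceIte]
    ring
  calc |(1 - schurComplementNone (1 - E) : Matrix ι ι K) i j|
      ≤ |E (some i) (some j)| + |E (some i) none| * |E none (some j)| / |1 - E none none| := by
        rw [happly, ← abs_mul, ← abs_div]
        exact abs_add_le _ _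
    _ ≤ u (some i) * v (some j) +
          u (some i) * v none * (u none * v (some j)) / (1 - u none * v none) := by
        have hcol : 0 ≤ u (some i) * v none := (abs_nonneg _).trans (hE (some i) none)
        have hrow : 0 ≤ u none * v (some j) := (abs_nonneg _).trans (hE none (some j))
        gcongr <;> apply hE
    _ = u (some i) / (1 - u none * v none) * v (some j) := by
        rw [div_mul_eq_mul_div, eq_div_iff hp.ne', add_mul, div_mul_cancel₀ _ hp.ne']
        ring

theorem one_sub_dotProduct_le_det_one_sub_of_lt [Fintype ι] [DecidableEq ι] {E : Matrix ι ι K}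
    {u v : ι → K} (hE : ∀ i j, |E i j| ≤ u i * v j) (huv : u ⬝ᵥ v < 1) :
    1 - u ⬝ᵥ v ≤ (1 - E).det := by
  refine Fintype.induction_empty_option (P := fun ι _ => ∀ [DecidableEq ι] {E : Matrix ι ι K}
    {u v : ι → K}, (∀ i j, |E i j| ≤ u i * v j) → u ⬝ᵥ v < 1 → 1 - u ⬝ᵥ v ≤ (1 - E).det)
    ?of_equiv ?empty ?option ι hE huv
  case of_equiv =>
    intro α β _ e ih _ E u v hE huv
    let := Fintype.ofEquiv β e.symm
    classical
    have hdot : (u ∘ e) ⬝ᵥ (v ∘ e) = u ⬝ᵥ v := e.sum_comp fun i => u i * v i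
    have hdet : (1 - E.submatrix e e).det = (1 - E).det := by
      rw [← det_submatrix_equiv_self e (1 - E), submatrix_sub, Pi.sub_apply, Pi.sub_apply,
        submatrix_one_equiv]
    rw [← hdot, ← hdet]
    exact ih (fun i j => hE (e i) (e j)) (hdot.trans_lt huv)
  case empty => simp
  case option =>
    intro ι _ ih inst E u v hE huv
    classical
    obtain rfl := Subsingleton.elim inst Option.instDecidableEq
    have hlt : u none * v none < 1 :=
      (Finset.single_le_sum (f := fun i => u i * v i)
        (fun i _ => (abs_nonneg _).trans (hE i i)) (Finset.mem_univ none)).trans_lt huv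
    have hp : 0 < 1 - u none * v none := sub_pos.2 hlt
    have hpivot : 1 - u none * v none ≤ (1 - E) none none :=
      sub_le_sub_left ((le_abs_self _).trans (hE none none)) 1
    let u' := fun i => u (some i) / (1 - u none * v none)
    let v' := fun i => v (some i)
    have hsplit : (1 - u none * v none) * (1 - u' ⬝ᵥ v') = 1 - u ⬝ᵥ v :=
      mul_one_sub_dotProduct_div_some hp.ne'
    have huv' : 0 < 1 - u' ⬝ᵥ v' :=
      pos_of_mul_pos_right (hsplit.symm ▸ sub_pos.2 huv) hp.le
    have hminor : 1 - u' ⬝ᵥ v' ≤ (schurComplementNone (1 - E)).det := by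
      simpa only [sub_sub_cancel] using
        ih (abs_one_sub_schurComplementNone_le hE hlt) (sub_pos.1 huv')
    calc 1 - u ⬝ᵥ v = (1 - u none * v none) * (1 - u' ⬝ᵥ v') := hsplit.symm
      _ ≤ (1 - E) none none * (schurComplementNone (1 - E)).det :=
        mul_le_mul hpivot hminor huv'.le (hp.le.trans hpivot)
      _ = (1 - E).det := (det_eq_mul_det_schurComplementNone (hp.trans_le hpivot).ne').symm

end Domination

theorem det_perturbed_identity_lower_bound_general {ι K : Type*} [Fintype ι] [DecidableEq ι]
    [Field K] [LinearOrder K] [IsStrictOrderedRing K] (E : Matrix ι ι K) (u v : ι → K)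
    (hE : ∀ i j, |E i j| ≤ u i * v j) (huv : u ⬝ᵥ v ≤ 1) :
    1 - u ⬝ᵥ v ≤ (1 - E).det := by
  let := Preorder.topology K
  have : OrderTopology K := ⟨rfl⟩
  have hscaled : ∀ t ∈ Set.Ioo (0 : K) 1, 1 - t * (u ⬝ᵥ v) ≤ (1 - t • E).det := by
    intro t ⟨ht₀, ht₁⟩
    rw [← smul_eq_mul, ← smul_dotProduct]
    apply one_sub_dotProduct_le_det_one_sub_of_lt
    · intro i j
      simpa [abs_mul, abs_of_pos ht₀, mul_assoc] using mul_le_mul_of_nonneg_left (hE i j) ht₀.le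
    · rw [smul_dotProduct]
      exact (mul_le_of_le_one_right ht₀.le huv).trans_lt ht₁
  have hlimit := le_on_closure hscaled (by fun_prop)
    (Continuous.matrix_det (by fun_prop)).continuousOn
    (x := 1) (by simp [closure_Ioo])
  simpa using hlimit

/-- Let `d ≥ 1` and `M = I − E` a real `d × d` matrix with `|e_{ij}| ≤ ε` for
all `i, j`, where `d ε ≤ 1`.  Then `det M ≥ 1 − d ε`. -/
theorem det_perturbed_identity_lower_bound (d : ℕ) (hd : 1 ≤ d)
    (E : Matrix (Fin d) (Fin d) ℝ) (ε : ℝ)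
    (hE : ∀ i j, |E i j| ≤ ε)
    (hsum : (d : ℝ) * ε ≤ 1) :
    (1 - E).det ≥ 1 - (d : ℝ) * ε := by
  simpa [dotProduct] using det_perturbed_identity_lower_bound_general E (fun _ => ε) 1
    (by simpa using hE) (by simpa [dotProduct] using hsum)
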